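/- Let d be a graph pseudometric on a set X with edge set E, let xy ∈ [X]² \ E, let r be a real number with ď(x,y) ≤ r ≤ d̂(x,y), and let D = d ∪ {⟨xy,r⟩}. Then for all u, v ∈ X: D̂(u,v) ≤ d̂(u,v) and max{ď(u,v), r − d̈(xy,uv)} ≤ Ď(u,v). -/

import Mathlib

open scoped Classical

universe u

namespace GraphMetricPaper

variable {X : Type u}

/-- The vertex set `V = ⋃ E` of a graph given by an adjacency relation `E`. -/
def Vtx (E : X → X → Prop) : Set X := {x | ∃ y, E x y}

/-- Two points are joined by a walk in the graph `E`. -/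
def Joined (E : X → X → Prop) (x y : X) : Prop :=
  ∃ (n : ℕ) (c : ℕ → X), c 0 = x ∧ c n = y ∧ ∀ i, i < n → E (c i) (c (i + 1))

/-- The set of weights of walks from `x` to `y`. -/
def walkSums (E : X → X → Prop) (d : X → X → ℝ) (x y : X) : Set ℝ :=
  {s | ∃ (n : ℕ) (c : ℕ → X), c 0 = x ∧ c n = y ∧ (∀ i, i < n → E (c i) (c (i + 1))) ∧
    s = ∑ i ∈ Finset.range n, d (c i) (c (i + 1))}

/-- The shortest-path pseudometric `d̂` determined by a weight function `d` on a graph `E`. -/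
noncomputable def hatd (E : X → X → Prop) (d : X → X → ℝ) (x y : X) : ℝ :=
  sInf (walkSums E d x y)

/-- The function `ď` bounding the possible extensions of `d` from below:
`ď(x,y) = sup_{ab ∈ E} max {0, d(ab) - d̂(a,x) - d̂(y,b)}`. -/
noncomputable def checkd (E : X → X → Prop) (d : X → X → ℝ) (x y : X) : ℝ :=
  sSup ({0} ∪ {r | ∃ a b, E a b ∧ r = d a b - hatd E d a x - hatd E d y b})

/-- The pseudometric `d̈` on doubletons:
`d̈(xy,uv) = min {d̂(x,u) + d̂(y,v), d̂(x,v) + d̂(y,u)}`. -/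
noncomputable def ddot (E : X → X → Prop) (d : X → X → ℝ) (x y u v : X) : ℝ :=
  min (hatd E d x u + hatd E d y v) (hatd E d x v + hatd E d y u)

/-- `d` is a graph pseudometric with edge relation `E`:  `E` is a (symmetric, irreflexive)
connected graph, `d` is a nonnegative symmetric weight on the edges, and `d = d̂` on edges. -/
structure IsGraphPseudometric (E : X → X → Prop) (d : X → X → ℝ) : Prop where
  symm : ∀ ⦃a b⦄, E a b → E b a
  irrefl : ∀ a, ¬ E a a
  wt_symm : ∀ ⦃a b⦄, E a b → d a b = d b a
  nonneg : ∀ ⦃a b⦄, E a b → 0 ≤ d a b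
  connected : ∀ x ∈ Vtx E, ∀ y ∈ Vtx E, Joined E x y
  edge_eq : ∀ ⦃a b⦄, E a b → d a b = hatd E d a b

/-- A graph metric is a graph pseudometric with strictly positive weights. -/
def IsGraphMetric (E : X → X → Prop) (d : X → X → ℝ) : Prop :=
  IsGraphPseudometric E d ∧ ∀ ⦃a b⦄, E a b → 0 < d a b

/-- A floppy graph pseudometric: `ď(x,y) < d̂(x,y)` for every `xy ∈ [V]² \ E`. -/
def FloppyPseudometric (E : X → X → Prop) (d : X → X → ℝ) : Prop :=
  IsGraphPseudometric E d ∧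
    ∀ x ∈ Vtx E, ∀ y ∈ Vtx E, x ≠ y → ¬ E x y → checkd E d x y < hatd E d x y

/-- A floppy graph metric: `ď(x,y) < d̂(x,y)` for every `xy ∈ [V]² \ E`. -/
def FloppyMetric (E : X → X → Prop) (d : X → X → ℝ) : Prop :=
  IsGraphMetric E d ∧
    ∀ x ∈ Vtx E, ∀ y ∈ Vtx E, x ≠ y → ¬ E x y → checkd E d x y < hatd E d x y

/-- The edge relation of the one-step extension `E ∪ {xy}`. -/
def extEdge (E : X → X → Prop) (x y : X) : X → X → Prop :=
  fun a b => E a b ∨ (a = x ∧ b = y) ∨ (a = y ∧ b = x)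

/-- The weight function of the one-step extension `d ∪ {⟨xy, r⟩}`. -/
noncomputable def extWt (d : X → X → ℝ) (x y : X) (r : ℝ) : X → X → ℝ :=
  fun a b => if (a = x ∧ b = y) ∨ (a = y ∧ b = x) then r else d a b

/-- The set `[V]² \ E` of unordered pairs of distinct vertices that are not edges. -/
def nonEdgePairs (E : X → X → Prop) : Set (Sym2 X) :=
  {e | ∃ a b : X, e = s(a, b) ∧ a ≠ b ∧ a ∈ Vtx E ∧ b ∈ Vtx E ∧ ¬ E a b}

/-- A set of (unordered) weighted pairs, presented as a relation `R`, is a full metric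
on `V`: it is symmetric, its domain is exactly `[V]²`, it is single-valued, positive,
and satisfies the triangle inequality. -/
def IsFullMetricRel (V : Set X) (R : X → X → ℝ → Prop) : Prop :=
  (∀ a b r, R a b r → R b a r) ∧
  (∀ a b r, R a b r → a ∈ V ∧ b ∈ V ∧ a ≠ b) ∧
  (∀ a b, a ∈ V → b ∈ V → a ≠ b → ∃ r, R a b r) ∧
  (∀ a b r s, R a b r → R a b s → r = s) ∧
  (∀ a b r, R a b r → 0 < r) ∧
  (∀ a b c r s t, R a b r → R b c s → R a c t → t ≤ r + s)

/-- A weight function `D` on `[V]²` is a full metric on `V`. -/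
def IsFullMetricOn (V : Set X) (D : X → X → ℝ) : Prop :=
  (∀ a b, a ∈ V → b ∈ V → a ≠ b → D a b = D b a) ∧
  (∀ a b, a ∈ V → b ∈ V → a ≠ b → 0 < D a b) ∧
  (∀ a b c, a ∈ V → b ∈ V → c ∈ V → a ≠ b → b ≠ c → a ≠ c → D a c ≤ D a b + D b c)

/-- Player I has a winning strategy in the metric-extending game `Game_d(lam, Fam)`:
there are functions `S1, S2` choosing, for each inning `β < lam` and each sequence of
previous answers of player II, a legal doubleton in `[V]²` and a set from `Fam`, such that
for every play of player II respecting the strategy, the resulting relation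
`d ∪ {⟨x_α y_α, r_α⟩ : α < lam}` is a full metric on `V`. -/
def WinningStratI (V : Set X) (E : X → X → Prop) (d : X → X → ℝ)
    (lam : Ordinal.{u}) (Fam : Set (Set ℝ)) : Prop :=
  ∃ (S1 : ∀ β : Ordinal.{u}, β < lam → (∀ α : Ordinal.{u}, α < β → ℝ) → X × X)
    (S2 : ∀ β : Ordinal.{u}, β < lam → (∀ α : Ordinal.{u}, α < β → ℝ) → Set ℝ),
    (∀ β hβ s, S2 β hβ s ∈ Fam) ∧
    (∀ β hβ s, (S1 β hβ s).1 ∈ V ∧ (S1 β hβ s).2 ∈ V ∧ (S1 β hβ s).1 ≠ (S1 β hβ s).2) ∧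
    (∀ s : ∀ α : Ordinal.{u}, α < lam → ℝ,
      (∀ α (hα : α < lam), s α hα ∈ S2 α hα (fun γ hγ => s γ (hγ.trans hα))) →
      IsFullMetricRel V (fun a b r =>
        (E a b ∧ r = d a b) ∨
        ∃ α, ∃ hα : α < lam,
          ((a = (S1 α hα (fun γ hγ => s γ (hγ.trans hα))).1 ∧
            b = (S1 α hα (fun γ hγ => s γ (hγ.trans hα))).2) ∨
           (a = (S1 α hα (fun γ hγ => s γ (hγ.trans hα))).2 ∧
            b = (S1 α hα (fun γ hγ => s γ (hγ.trans hα))).1)) ∧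
          r = s α hα))

/-- Player II has a winning strategy in the metric-extending game `Game_d(lam, Fam)`:
there is a function `T` assigning to each inning `β < lam` and each sequence of moves of
player I (of length `β + 1`) an answer in the set component of the last move, such that
for every legal play of player I, the resulting relation is not a full metric on `V`. -/
def WinningStratII (V : Set X) (E : X → X → Prop) (d : X → X → ℝ)
    (lam : Ordinal.{u}) (Fam : Set (Set ℝ)) : Prop :=
  ∃ T : ∀ β : Ordinal.{u}, β < lam → (∀ α : Ordinal.{u}, α ≤ β → (X × X) × Set ℝ) → ℝ,
    (∀ β hβ p, (p β le_rfl).2 ∈ Fam → T β hβ p ∈ (p β le_rfl).2) ∧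
    (∀ p : ∀ α : Ordinal.{u}, α < lam → (X × X) × Set ℝ,
      (∀ α hα, (p α hα).1.1 ∈ V ∧ (p α hα).1.2 ∈ V ∧ (p α hα).1.1 ≠ (p α hα).1.2 ∧
        (p α hα).2 ∈ Fam) →
      ¬ IsFullMetricRel V (fun a b r =>
        (E a b ∧ r = d a b) ∨
        ∃ α, ∃ hα : α < lam,
          ((a = (p α hα).1.1 ∧ b = (p α hα).1.2) ∨
           (a = (p α hα).1.2 ∧ b = (p α hα).1.1)) ∧
          r = T α hα (fun γ hγ => p γ (lt_of_le_of_lt hγ hα))))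

/-- The edge relation of the glued graph `E_d = E_p ∪ ⋃_{f ∈ F} E_f`. -/
def gluedEdge (Ep : X → X → Prop) (F : Set ((X → X → Prop) × (X → X → ℝ))) :
    X → X → Prop :=
  fun a b => Ep a b ∨ ∃ f ∈ F, f.1 a b

/-- `Λ(v; B) = inf {d̂(a,v) + d̂(v,b) - d̂(a,b) : a, b ∈ B}`. -/
noncomputable def Lam (E : X → X → Prop) (d : X → X → ℝ) (v : X) (B : Set X) : ℝ :=
  sInf {r | ∃ a ∈ B, ∃ b ∈ B, r = hatd E d a v + hatd E d v b - hatd E d a b}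

/-- The gluing setup: a graph pseudometric `p = (Ep, wp)` and a family `F` of graph
pseudometrics such that each member meets `V_p`, agrees with `p̂` on the intersection of
the vertex sets, and distinct members only meet inside `V_p`; `wd` is the glued weight
function `d = p ∪ ⋃ F` on `E_d = E_p ∪ ⋃_{f ∈ F} E_f`. -/
structure GluingSetup (Ep : X → X → Prop) (wp : X → X → ℝ)
    (F : Set ((X → X → Prop) × (X → X → ℝ))) (wd : X → X → ℝ) : Prop where
  hp : IsGraphPseudometric Ep wp
  hF : ∀ f ∈ F, IsGraphPseudometric f.1 f.2
  meet : ∀ f ∈ F, (Vtx f.1 ∩ Vtx Ep).Nonempty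
  agree : ∀ f ∈ F, ∀ x ∈ Vtx f.1 ∩ Vtx Ep, ∀ y ∈ Vtx f.1 ∩ Vtx Ep, x ≠ y →
    hatd f.1 f.2 x y = hatd Ep wp x y
  inter_sub : ∀ f ∈ F, ∀ g ∈ F, f ≠ g → Vtx f.1 ∩ Vtx g.1 ⊆ Vtx Ep
  wd_p : ∀ ⦃a b⦄, Ep a b → wd a b = wp a b
  wd_F : ∀ f ∈ F, ∀ ⦃a b⦄, f.1 a b → wd a b = f.2 a b

/-!
When `r ≥ 0`, a walk in `E ∪ {xy}` can be cut down to one that uses the new edge at most once, so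
`D̂(u,v) = min {d̂(u,v), r + d̈(xy,uv)}`. Hence `D̂ ≤ d̂`, which lowers the two distances subtracted
in each term of `ď`; as every edge keeps its weight, `Ď` dominates `ď`, and the term of the new
edge, taken in both orientations, contributes `r − d̈(xy,uv)`. By the same formula
`d̂ ≤ D̂ + d̂(x,y)`, so the supremum defining `Ď` is finite; an infinite one would be `0` by
convention.
-/

section Walks

variable {E E' : X → X → Prop} {d d' : X → X → ℝ} {a b c : X}

lemma Joined.mono (h : Joined E a b) (hE : ∀ ⦃s t⦄, E s t → E' s t) : Joined E' a b := by
  obtain ⟨n, w, hw₀, hwn, hw⟩ := h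
  exact ⟨n, w, hw₀, hwn, fun i hi => hE (hw i hi)⟩

lemma Joined.walkSums_nonempty (h : Joined E a b) (d : X → X → ℝ) :
    (walkSums E d a b).Nonempty := by
  obtain ⟨n, w, hw₀, hwn, hw⟩ := h
  exact ⟨_, n, w, hw₀, hwn, hw, rfl⟩

lemma nonneg_of_mem_walkSums (hd : ∀ ⦃s t⦄, E s t → 0 ≤ d s t) {s : ℝ}
    (hs : s ∈ walkSums E d a b) : 0 ≤ s := by
  obtain ⟨n, w, -, -, hw, rfl⟩ := hs
  exact Finset.sum_nonneg fun i hi => hd (hw i (Finset.mem_range.1 hi))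

lemma bddBelow_walkSums (hd : ∀ ⦃s t⦄, E s t → 0 ≤ d s t) (a b : X) :
    BddBelow (walkSums E d a b) :=
  ⟨0, fun _ => nonneg_of_mem_walkSums hd⟩

lemma zero_mem_walkSums_self (E : X → X → Prop) (d : X → X → ℝ) (a : X) :
    0 ∈ walkSums E d a a :=
  ⟨0, fun _ => a, by simp⟩

lemma weight_mem_walkSums (d : X → X → ℝ) (hab : E a b) : d a b ∈ walkSums E d a b := by
  refine ⟨1, fun i => if i = 0 then a else b, by simp, by simp, fun i hi => ?_, by simp⟩
  obtain rfl : i = 0 := Nat.lt_one_iff.1 hi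
  simpa using hab

lemma add_mem_walkSums {s t : ℝ} (hs : s ∈ walkSums E d a b) (ht : t ∈ walkSums E d b c) :
    s + t ∈ walkSums E d a c := by
  obtain ⟨m, p, rfl, rfl, hp, rfl⟩ := hs
  obtain ⟨n, q, hq₀, rfl, hq, rfl⟩ := ht
  let w : ℕ → X := fun i => if i ≤ m then p i else q (i - m)
  have w_left {i : ℕ} (hi : i ≤ m) : w i = p i := if_pos hi
  have w_right (i : ℕ) : w (m + i) = q i := by
    rcases Nat.eq_zero_or_pos i with rfl | hi
    · simp [w, hq₀]
    · simp [w, hi.ne']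
  refine ⟨m + n, w, w_left m.zero_le, w_right n, fun i hi => ?_, ?_⟩
  · rcases lt_or_ge i m with him | hmi
    · rw [w_left him.le, w_left him]
      exact hp i him
    · obtain ⟨j, rfl⟩ := Nat.exists_eq_add_of_le hmi
      rw [add_assoc, w_right, w_right]
      exact hq j (by omega)
  · rw [Finset.sum_range_add]
    congr 1
    · refine Finset.sum_congr rfl fun i hi => ?_
      have him := Finset.mem_range.1 hi
      rw [w_left him.le, w_left him]
    · simp only [add_assoc, w_right]

lemma walkSums_subset_swap (hE : ∀ ⦃s t⦄, E s t → E t s) (hd : ∀ ⦃s t⦄, E s t → d s t = d t s)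
    (a b : X) : walkSums E d a b ⊆ walkSums E d b a := by
  rintro _ ⟨n, w, rfl, rfl, hw, rfl⟩
  have reverse_step {i : ℕ} (hi : i < n) : n - i = n - 1 - i + 1 ∧ n - (i + 1) = n - 1 - i := by
    omega
  refine ⟨n, fun i => w (n - i), by simp, by simp, fun i hi => ?_, ?_⟩
  · obtain ⟨h₁, h₂⟩ := reverse_step hi
    simp only [h₁, h₂]
    exact hE (hw _ (by omega))
  · rw [← Finset.sum_range_reflect]
    refine Finset.sum_congr rfl fun i hi => ?_
    obtain ⟨h₁, h₂⟩ := reverse_step (Finset.mem_range.1 hi)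
    simp only [h₁, h₂]
    exact hd (hw _ (by have := Finset.mem_range.1 hi; omega))

lemma walkSums_comm (hE : ∀ ⦃s t⦄, E s t → E t s) (hd : ∀ ⦃s t⦄, E s t → d s t = d t s)
    (a b : X) : walkSums E d a b = walkSums E d b a :=
  (walkSums_subset_swap hE hd a b).antisymm (walkSums_subset_swap hE hd b a)

lemma hatd_nonneg (hd : ∀ ⦃s t⦄, E s t → 0 ≤ d s t) (a b : X) : 0 ≤ hatd E d a b :=
  Real.sInf_nonneg fun _ => nonneg_of_mem_walkSums hd

lemma hatd_self (hd : ∀ ⦃s t⦄, E s t → 0 ≤ d s t) (a : X) : hatd E d a a = 0 :=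
  (csInf_le (bddBelow_walkSums hd a a) (zero_mem_walkSums_self E d a)).antisymm
    (hatd_nonneg hd a a)

lemma hatd_le_weight (hd : ∀ ⦃s t⦄, E s t → 0 ≤ d s t) (hab : E a b) : hatd E d a b ≤ d a b :=
  csInf_le (bddBelow_walkSums hd a b) (weight_mem_walkSums d hab)

lemma hatd_comm (hE : ∀ ⦃s t⦄, E s t → E t s) (hd : ∀ ⦃s t⦄, E s t → d s t = d t s)
    (a b : X) : hatd E d a b = hatd E d b a :=
  congrArg sInf (walkSums_comm hE hd a b)

open scoped Pointwise in
lemma hatd_triangle (hd : ∀ ⦃s t⦄, E s t → 0 ≤ d s t) (hab : Joined E a b) (hbc : Joined E b c) :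
    hatd E d a c ≤ hatd E d a b + hatd E d b c := by
  have hab' := hab.walkSums_nonempty d
  have hbc' := hbc.walkSums_nonempty d
  calc hatd E d a c ≤ sInf (walkSums E d a b + walkSums E d b c) :=
        csInf_le_csInf (bddBelow_walkSums hd a c) (hab'.add hbc')
          (Set.add_subset_iff.2 fun _ hs _ ht => add_mem_walkSums hs ht)
    _ = hatd E d a b + hatd E d b c :=
        csInf_add hab' (bddBelow_walkSums hd a b) hbc' (bddBelow_walkSums hd b c)

lemma sub_le_hatd {f : X → ℝ} (hab : Joined E a b) (hf : ∀ ⦃s t⦄, E s t → f s ≤ d s t + f t) :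
    f a - f b ≤ hatd E d a b := by
  refine le_csInf (hab.walkSums_nonempty d) ?_
  rintro _ ⟨n, w, rfl, rfl, hw, rfl⟩
  rw [← Finset.sum_range_sub' (fun i => f (w i))]
  exact Finset.sum_le_sum fun i hi => sub_le_iff_le_add.2 (hf (hw i (Finset.mem_range.1 hi)))

lemma hatd_le_hatd_of_subgraph (hE : ∀ ⦃s t⦄, E s t → E' s t)
    (hd' : ∀ ⦃s t⦄, E' s t → 0 ≤ d' s t) (hdd' : ∀ ⦃s t⦄, E s t → d' s t ≤ d s t)
    (hab : Joined E a b) : hatd E' d' a b ≤ hatd E d a b := by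
  refine le_csInf (hab.walkSums_nonempty d) ?_
  rintro _ ⟨n, w, hw₀, hwn, hw, rfl⟩
  calc hatd E' d' a b ≤ ∑ i ∈ Finset.range n, d' (w i) (w (i + 1)) :=
        csInf_le (bddBelow_walkSums hd' a b) ⟨n, w, hw₀, hwn, fun i hi => hE (hw i hi), rfl⟩
    _ ≤ ∑ i ∈ Finset.range n, d (w i) (w (i + 1)) :=
        Finset.sum_le_sum fun i hi => hdd' (hw i (Finset.mem_range.1 hi))

lemma checkd_nonneg (E : X → X → Prop) (d : X → X → ℝ) (u v : X) : 0 ≤ checkd E d u v :=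
  Real.sSup_nonneg' ⟨0, Or.inl rfl, le_rfl⟩

lemma checkd_le {u v : X} {C : ℝ} (hC₀ : 0 ≤ C)
    (hC : ∀ ⦃s t⦄, E s t → d s t - hatd E d s u - hatd E d v t ≤ C) : checkd E d u v ≤ C := by
  refine csSup_le ⟨0, Or.inl rfl⟩ ?_
  rintro _ (rfl | ⟨s, t, hst, rfl⟩)
  exacts [hC₀, hC hst]

lemma le_checkd {u v : X} {C : ℝ}
    (hC : ∀ ⦃s t⦄, E s t → d s t - hatd E d s u - hatd E d v t ≤ C) (hab : E a b) :
    d a b - hatd E d a u - hatd E d v b ≤ checkd E d u v := by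
  refine le_csSup ⟨max 0 C, ?_⟩ (Or.inr ⟨a, b, hab, rfl⟩)
  rintro _ (rfl | ⟨s, t, hst, rfl⟩)
  exacts [le_max_left 0 C, le_max_of_le_right (hC hst)]

end Walks

namespace IsGraphPseudometric

variable {E : X → X → Prop} {d : X → X → ℝ} {u v w x y : X}

lemma triangle (hd : IsGraphPseudometric E d) (hu : u ∈ Vtx E) (hv : v ∈ Vtx E)
    (hw : w ∈ Vtx E) : hatd E d u w ≤ hatd E d u v + hatd E d v w :=
  hatd_triangle hd.nonneg (hd.connected u hu v hv) (hd.connected v hv w hw)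

lemma comm (hd : IsGraphPseudometric E d) (u v : X) : hatd E d u v = hatd E d v u :=
  hatd_comm hd.symm hd.wt_symm u v

lemma ddot_nonneg (hd : IsGraphPseudometric E d) (x y u v : X) : 0 ≤ ddot E d x y u v :=
  have h := hatd_nonneg hd.nonneg
  le_min (add_nonneg (h x u) (h y v)) (add_nonneg (h x v) (h y u))

lemma ddot_le_hatd_add_ddot (hd : IsGraphPseudometric E d) (hx : x ∈ Vtx E) (hy : y ∈ Vtx E)
    (hu : u ∈ Vtx E) (hv : v ∈ Vtx E) (w : X) :
    ddot E d x y u w ≤ hatd E d u v + ddot E d x y v w := by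
  have hxu := hd.triangle hx hv hu
  have hyu := hd.triangle hy hv hu
  rw [hd.comm v u] at hxu hyu
  rw [ddot, ddot, ← min_add_add_left]
  exact min_le_min (by linarith) (by linarith)

lemma hatd_le_hatd_add_ddot (hd : IsGraphPseudometric E d) (hx : x ∈ Vtx E) (hy : y ∈ Vtx E)
    (hu : u ∈ Vtx E) (hv : v ∈ Vtx E) :
    hatd E d u v ≤ hatd E d x y + ddot E d x y u v := by
  rw [ddot, ← min_add_add_left, hd.comm x u, hd.comm y u]
  refine le_min ?_ ?_
  · linarith [hd.triangle hu hx hv, hd.triangle hx hy hv]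
  · linarith [hd.triangle hu hy hv, hd.triangle hy hx hv, hd.comm x y]

end IsGraphPseudometric

lemma ddot_swap_left (E : X → X → Prop) (d : X → X → ℝ) (x y u v : X) :
    ddot E d y x u v = ddot E d x y u v := by
  simp only [ddot, min_comm, add_comm]

section Extension

variable {E : X → X → Prop} {d : X → X → ℝ} {a b u v x y : X} {r : ℝ}

lemma mem_Vtx_of_extEdge (hE : ∀ ⦃s t⦄, E s t → E t s) (hx : x ∈ Vtx E) (hy : y ∈ Vtx E)
    (hab : extEdge E x y a b) : a ∈ Vtx E ∧ b ∈ Vtx E := by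
  rcases hab with hab | ⟨rfl, rfl⟩ | ⟨rfl, rfl⟩
  exacts [⟨⟨b, hab⟩, ⟨a, hE hab⟩⟩, ⟨hx, hy⟩, ⟨hy, hx⟩]

lemma extWt_apply_self (d : X → X → ℝ) (x y : X) (r : ℝ) : extWt d x y r x y = r :=
  if_pos (Or.inl ⟨rfl, rfl⟩)

lemma extWt_apply_swap (d : X → X → ℝ) (x y : X) (r : ℝ) : extWt d x y r y x = r :=
  if_pos (Or.inr ⟨rfl, rfl⟩)

lemma extWt_of_edge (hE : ∀ ⦃s t⦄, E s t → E t s) (hnE : ¬ E x y) (d : X → X → ℝ) (r : ℝ)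
    (hab : E a b) : extWt d x y r a b = d a b := by
  refine if_neg ?_
  rintro (⟨rfl, rfl⟩ | ⟨rfl, rfl⟩)
  exacts [hnE hab, hnE (hE hab)]

lemma extWt_nonneg (hd : ∀ ⦃s t⦄, E s t → 0 ≤ d s t) (hr : 0 ≤ r) ⦃a b : X⦄
    (hab : extEdge E x y a b) : 0 ≤ extWt d x y r a b := by
  unfold extWt
  split_ifs with h
  exacts [hr, hd (hab.resolve_right h)]

lemma hatd_ext_le (hd : IsGraphPseudometric E d) (hnE : ¬ E x y) (hr : 0 ≤ r)
    (hu : u ∈ Vtx E) (hv : v ∈ Vtx E) :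
    hatd (extEdge E x y) (extWt d x y r) u v ≤ hatd E d u v :=
  hatd_le_hatd_of_subgraph (fun _ _ => Or.inl) (extWt_nonneg hd.nonneg hr)
    (fun _ _ hst => (extWt_of_edge hd.symm hnE d r hst).le) (hd.connected u hu v hv)

lemma hatd_ext_triangle (hd : IsGraphPseudometric E d) (hr : 0 ≤ r) {w : X}
    (hu : u ∈ Vtx E) (hv : v ∈ Vtx E) (hw : w ∈ Vtx E) :
    hatd (extEdge E x y) (extWt d x y r) u w ≤
      hatd (extEdge E x y) (extWt d x y r) u v + hatd (extEdge E x y) (extWt d x y r) v w :=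
  hatd_triangle (extWt_nonneg hd.nonneg hr) ((hd.connected u hu v hv).mono fun _ _ => Or.inl)
    ((hd.connected v hv w hw).mono fun _ _ => Or.inl)

lemma hatd_ext_le_add_ddot (hd : IsGraphPseudometric E d) (hx : x ∈ Vtx E) (hy : y ∈ Vtx E)
    (hnE : ¬ E x y) (hr : 0 ≤ r) (hu : u ∈ Vtx E) (hv : v ∈ Vtx E) :
    hatd (extEdge E x y) (extWt d x y r) u v ≤ r + ddot E d x y u v := by
  have through {s t : X} (hs : s ∈ Vtx E) (ht : t ∈ Vtx E) (hst : extEdge E x y s t)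
      (hwt : extWt d x y r s t = r) :
      hatd (extEdge E x y) (extWt d x y r) u v ≤ r + (hatd E d s u + hatd E d t v) := by
    have hst_le := hatd_le_weight (extWt_nonneg hd.nonneg hr) hst
    rw [hwt] at hst_le
    linarith [hatd_ext_triangle (x := x) (y := y) hd hr hu hs hv,
      hatd_ext_triangle (x := x) (y := y) hd hr hs ht hv,
      hatd_ext_le hd hnE hr hu hs, hatd_ext_le hd hnE hr ht hv, hd.comm s u]
  rw [ddot, ← min_add_add_left]
  refine le_min (through hx hy (Or.inr (Or.inl ⟨rfl, rfl⟩)) (extWt_apply_self d x y r)) ?_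
  rw [add_comm (hatd E d x v)]
  exact through hy hx (Or.inr (Or.inr ⟨rfl, rfl⟩)) (extWt_apply_swap d x y r)

lemma min_hatd_ddot_le_add_of_endpoints (hd : IsGraphPseudometric E d) (hr : 0 ≤ r) (x y v : X) :
    min (hatd E d x v) (r + ddot E d x y x v) ≤
      r + min (hatd E d y v) (r + ddot E d x y y v) := by
  have ddot_left_le : ddot E d x y x v ≤ hatd E d y v :=
    (min_le_left _ _).trans_eq (by rw [hatd_self hd.nonneg, zero_add])
  have le_ddot_right : min (hatd E d x v) (hatd E d y v) ≤ ddot E d x y y v := by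
    rw [ddot, hatd_self hd.nonneg, add_zero, min_comm]
    exact min_le_min_right _ (le_add_of_nonneg_left (hatd_nonneg hd.nonneg x y))
  rw [← min_add_add_left]
  refine le_min (min_le_of_right_le (by gcongr)) ?_
  calc min (hatd E d x v) (r + ddot E d x y x v)
      ≤ min (r + hatd E d x v) (r + hatd E d y v) :=
        min_le_min (le_add_of_nonneg_left hr) (by gcongr)
    _ = r + min (hatd E d x v) (hatd E d y v) := min_add_add_left _ _ _
    _ ≤ r + (r + ddot E d x y y v) := by linarith

lemma min_hatd_ddot_le_extWt_add (hd : IsGraphPseudometric E d) (hx : x ∈ Vtx E)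
    (hy : y ∈ Vtx E) (hnE : ¬ E x y) (hr : 0 ≤ r) (hv : v ∈ Vtx E)
    (hab : extEdge E x y a b) :
    min (hatd E d a v) (r + ddot E d x y a v) ≤
      extWt d x y r a b + min (hatd E d b v) (r + ddot E d x y b v) := by
  obtain ⟨ha, hb⟩ := mem_Vtx_of_extEdge hd.symm hx hy hab
  rcases hab with hab | ⟨rfl, rfl⟩ | ⟨rfl, rfl⟩
  · rw [extWt_of_edge hd.symm hnE d r hab, hd.edge_eq hab, ← min_add_add_left]
    refine min_le_min (hd.triangle ha hb hv) ?_
    linarith [hd.ddot_le_hatd_add_ddot hx hy ha hb v]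
  · rw [extWt_apply_self]
    exact min_hatd_ddot_le_add_of_endpoints hd hr a b v
  · rw [extWt_apply_swap, ← ddot_swap_left, ← ddot_swap_left (u := b)]
    exact min_hatd_ddot_le_add_of_endpoints hd hr a b v

theorem hatd_ext_eq_min (hd : IsGraphPseudometric E d) (hx : x ∈ Vtx E) (hy : y ∈ Vtx E)
    (hnE : ¬ E x y) (hr : 0 ≤ r) (hu : u ∈ Vtx E) (hv : v ∈ Vtx E) :
    hatd (extEdge E x y) (extWt d x y r) u v =
      min (hatd E d u v) (r + ddot E d x y u v) := by
  refine le_antisymm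
    (le_min (hatd_ext_le hd hnE hr hu hv) (hatd_ext_le_add_ddot hd hx hy hnE hr hu hv)) ?_
  -- As a function of `u` the minimum drops by at most the weight along each edge, so no surgery on
  -- walks is needed.
  have h := sub_le_hatd (E := extEdge E x y)
    (f := fun z => min (hatd E d z v) (r + ddot E d x y z v))
    ((hd.connected u hu v hv).mono fun _ _ => Or.inl)
    fun _ _ => min_hatd_ddot_le_extWt_add hd hx hy hnE hr hv
  have potential_end : min (hatd E d v v) (r + ddot E d x y v v) = 0 := by
    rw [hatd_self hd.nonneg, min_eq_left (add_nonneg hr (hd.ddot_nonneg x y v v))]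
  simpa only [potential_end, sub_zero] using h

lemma hatd_le_hatd_ext_add (hd : IsGraphPseudometric E d) (hx : x ∈ Vtx E) (hy : y ∈ Vtx E)
    (hnE : ¬ E x y) (hr : 0 ≤ r) (hu : u ∈ Vtx E) (hv : v ∈ Vtx E) :
    hatd E d u v ≤ hatd (extEdge E x y) (extWt d x y r) u v + hatd E d x y := by
  rw [hatd_ext_eq_min hd hx hy hnE hr hu hv, ← min_add_add_right]
  exact le_min (le_add_of_nonneg_right (hatd_nonneg hd.nonneg x y))
    (by linarith [hd.hatd_le_hatd_add_ddot hx hy hu hv])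

lemma extWt_le_hatd_ext_add (hd : IsGraphPseudometric E d) (hx : x ∈ Vtx E) (hy : y ∈ Vtx E)
    (hnE : ¬ E x y) (hr : 0 ≤ r) (hab : extEdge E x y a b) :
    extWt d x y r a b ≤
      hatd (extEdge E x y) (extWt d x y r) a b + (r + hatd E d x y) := by
  obtain ⟨ha, hb⟩ := mem_Vtx_of_extEdge hd.symm hx hy hab
  rcases hab with hab | hab
  · rw [extWt_of_edge hd.symm hnE d r hab, hd.edge_eq hab]
    linarith [hatd_le_hatd_ext_add hd hx hy hnE hr ha hb]
  · rw [extWt, if_pos hab]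
    linarith [hatd_nonneg (extWt_nonneg (x := x) (y := y) hd.nonneg hr) a b,
      hatd_nonneg hd.nonneg x y]

lemma extWt_sub_hatd_le_checkd_ext (hd : IsGraphPseudometric E d) (hx : x ∈ Vtx E)
    (hy : y ∈ Vtx E) (hnE : ¬ E x y) (hr : 0 ≤ r) (hu : u ∈ Vtx E) (hv : v ∈ Vtx E)
    (hab : extEdge E x y a b) :
    extWt d x y r a b - hatd E d a u - hatd E d v b ≤
      checkd (extEdge E x y) (extWt d x y r) u v := by
  obtain ⟨ha, hb⟩ := mem_Vtx_of_extEdge hd.symm hx hy hab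
  have bounded ⦃s t : X⦄ (hst : extEdge E x y s t) :
      extWt d x y r s t - hatd (extEdge E x y) (extWt d x y r) s u -
          hatd (extEdge E x y) (extWt d x y r) v t ≤
        hatd (extEdge E x y) (extWt d x y r) u v + (r + hatd E d x y) := by
    obtain ⟨hs, ht⟩ := mem_Vtx_of_extEdge hd.symm hx hy hst
    linarith [extWt_le_hatd_ext_add hd hx hy hnE hr hst,
      hatd_ext_triangle (x := x) (y := y) hd hr hs hu ht,
      hatd_ext_triangle (x := x) (y := y) hd hr hu hv ht]
  linarith [le_checkd bounded hab, hatd_ext_le hd hnE hr ha hu, hatd_ext_le hd hnE hr hv hb]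

lemma checkd_le_checkd_ext (hd : IsGraphPseudometric E d) (hx : x ∈ Vtx E) (hy : y ∈ Vtx E)
    (hnE : ¬ E x y) (hr : 0 ≤ r) (hu : u ∈ Vtx E) (hv : v ∈ Vtx E) :
    checkd E d u v ≤ checkd (extEdge E x y) (extWt d x y r) u v := by
  refine checkd_le (checkd_nonneg _ _ u v) fun s t hst => ?_
  rw [← extWt_of_edge hd.symm hnE d r hst]
  exact extWt_sub_hatd_le_checkd_ext hd hx hy hnE hr hu hv (Or.inl hst)

lemma sub_ddot_le_checkd_ext (hd : IsGraphPseudometric E d) (hx : x ∈ Vtx E) (hy : y ∈ Vtx E)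
    (hnE : ¬ E x y) (hr : 0 ≤ r) (hu : u ∈ Vtx E) (hv : v ∈ Vtx E) :
    r - ddot E d x y u v ≤ checkd (extEdge E x y) (extWt d x y r) u v := by
  have hxy := extWt_sub_hatd_le_checkd_ext hd hx hy hnE hr hu hv (Or.inr (Or.inl ⟨rfl, rfl⟩))
  have hyx := extWt_sub_hatd_le_checkd_ext hd hx hy hnE hr hu hv (Or.inr (Or.inr ⟨rfl, rfl⟩))
  rw [extWt_apply_self, hd.comm v] at hxy
  rw [extWt_apply_swap, hd.comm v] at hyx
  rw [ddot, sub_le_comm]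
  exact le_min (by linarith) (by linarith)

theorem one_step_extension_estimates₁_general (hd : IsGraphPseudometric E d) (hx : x ∈ Vtx E)
    (hy : y ∈ Vtx E) (hnE : ¬ E x y) (hr : 0 ≤ r) (hu : u ∈ Vtx E) (hv : v ∈ Vtx E) :
    hatd (extEdge E x y) (extWt d x y r) u v ≤ hatd E d u v ∧
      max (checkd E d u v) (r - ddot E d x y u v) ≤
        checkd (extEdge E x y) (extWt d x y r) u v :=
  ⟨hatd_ext_le hd hnE hr hu hv,
    max_le (checkd_le_checkd_ext hd hx hy hnE hr hu hv)
      (sub_ddot_le_checkd_ext hd hx hy hnE hr hu hv)⟩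

end Extension

/-- With `D = d ∪ {⟨xy, r⟩}` for `ď(x,y) ≤ r ≤ d̂(x,y)`:
`D̂(u,v) ≤ d̂(u,v)` and `max {ď(u,v), r − d̈(xy,uv)} ≤ Ď(u,v)` for all `u, v ∈ X`. -/
theorem one_step_extension_estimates₁ (E : X → X → Prop) (d : X → X → ℝ)
    (hd : IsGraphPseudometric E d) (hvert : ∀ z : X, z ∈ Vtx E)
    (x y : X) (hxy : x ≠ y) (hnE : ¬ E x y) (r : ℝ)
    (hr₁ : checkd E d x y ≤ r) (hr₂ : r ≤ hatd E d x y) :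
    ∀ u v : X,
      hatd (extEdge E x y) (extWt d x y r) u v ≤ hatd E d u v ∧
      max (checkd E d u v) (r - ddot E d x y u v) ≤
        checkd (extEdge E x y) (extWt d x y r) u v := by
  intro u v
  exact one_step_extension_estimates₁_general hd (hvert x) (hvert y) hnE
    ((checkd_nonneg E d x y).trans hr₁) (hvert u) (hvert v)

end GraphMetricPaper
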